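/- For all choices of the inference kernel I and generator kernel G, the supremum over measurable discriminators D : X × Z → (0,1) of L_xz(D) = ∫ log D dπ_i + ∫ log(1 − D) dπ_g is at least −log 4, and it equals −log 4 if and only if π_i = π_g, i.e., if and only if the inference joint p(x)·p_i(z|x) equals the generator joint p(z)·p_g(x|z). At that point the optimal discriminator dπ_i/d(π_i + π_g) equals 1/2 (π_i + π_g)-almost everywhere. -/

import Mathlib

open MeasureTheory ProbabilityTheory
open scoped ENNReal ProbabilityTheory

/-! If `μ = ν`, then `log D + log (1 - D) ≤ -log 4` bounds every payoff pointwise. Conversely, tilt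
the constant discriminator `1 / 2` by `s / 2` on a measurable set `A`: compared with `1 / 2`, the
payoff changes by `μ A * log (1 + s) + ν A * log (1 - s)`, whose derivative at `s = 0` is
`μ A - ν A`. So `1 / 2` can only be optimal if `μ A = ν A` for every `A`. -/

section RealInequalities

lemma log_four : Real.log 4 = 2 * Real.log 2 := by
  rw [show (4 : ℝ) = 2 ^ 2 by norm_num, Real.log_pow, Nat.cast_ofNat]

lemma log_add_log_one_sub_le {d : ℝ} (hd : d ∈ Set.Ioo (0 : ℝ) 1) :
    Real.log d + Real.log (1 - d) ≤ -Real.log 4 := by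
  have hd' : 0 < 1 - d := sub_pos.2 hd.2
  calc Real.log d + Real.log (1 - d) = Real.log (d * (1 - d)) :=
        (Real.log_mul hd.1.ne' hd'.ne').symm
    _ ≤ Real.log 4⁻¹ :=
        Real.log_le_log (mul_pos hd.1 hd') (by nlinarith [sq_nonneg (2 * d - 1)])
    _ = -Real.log 4 := Real.log_inv 4

lemma eq_of_mul_log_one_add_add_mul_log_one_sub_nonpos {a b : ℝ}
    (h : ∀ s ∈ Set.Ioo (-1 : ℝ) 1, a * Real.log (1 + s) + b * Real.log (1 - s) ≤ 0) : a = b := by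
  let f : ℝ → ℝ := fun s => a * Real.log (1 + s) + b * Real.log (1 - s)
  have hmax : IsLocalMax f 0 := by
    filter_upwards [Ioo_mem_nhds (by norm_num : (-1 : ℝ) < 0) one_pos] with s hs
    simpa [f] using h s hs
  have hderiv : HasDerivAt f (a - b) 0 := by
    have hadd := (((hasDerivAt_id (0 : ℝ)).const_add 1).log (by simp)).const_mul a
    have hsub := (((hasDerivAt_id (0 : ℝ)).const_sub 1).log (by simp)).const_mul b
    exact (hadd.add hsub).congr_deriv (by simp [sub_eq_add_neg])
  exact sub_eq_zero.1 (hmax.hasDerivAt_eq_zero hderiv)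

end RealInequalities

section TiltedDiscriminator

variable {α : Type*} {A : Set α} {s : ℝ}

/-- The discriminator `1 / 2` tilted by `s / 2` on the set `A`, the test perturbation of the
indifferent discriminator. -/
noncomputable def tiltedDiscriminator (A : Set α) (s : ℝ) (p : α) : ℝ :=
  (1 + A.indicator (fun _ => s) p) / 2

lemma tiltedDiscriminator_mem_Ioo (hs : s ∈ Set.Ioo (-1 : ℝ) 1) (p : α) :
    tiltedDiscriminator A s p ∈ Set.Ioo (0 : ℝ) 1 := by
  by_cases hp : p ∈ A
  · simp only [tiltedDiscriminator, Set.indicator_of_mem hp]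
    constructor <;> linarith [hs.1, hs.2]
  · norm_num [tiltedDiscriminator, Set.indicator_of_notMem hp]

lemma one_sub_tiltedDiscriminator (A : Set α) (s : ℝ) (p : α) :
    1 - tiltedDiscriminator A s p = tiltedDiscriminator A (-s) p := by
  by_cases hp : p ∈ A
  · simp only [tiltedDiscriminator, Set.indicator_of_mem hp]
    ring
  · simp only [tiltedDiscriminator, Set.indicator_of_notMem hp]
    ring

lemma log_tiltedDiscriminator (A : Set α) (hs : -1 < s) (p : α) :
    Real.log (tiltedDiscriminator A s p)
      = A.indicator (fun _ => Real.log (1 + s)) p - Real.log 2 := by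
  by_cases hp : p ∈ A
  · simp [tiltedDiscriminator, hp, Real.log_div (by linarith : 1 + s ≠ 0) two_ne_zero]
  · simp [tiltedDiscriminator, hp]

end TiltedDiscriminator

section Game

variable {α : Type*} [MeasurableSpace α]

lemma rnDeriv_add_self_ae_eq_half (μ : Measure α) [SigmaFinite μ] :
    ∀ᵐ p ∂(μ + μ), μ.rnDeriv (μ + μ) p = 1 / 2 := by
  have hhalf : ∀ᵐ p ∂μ, μ.rnDeriv (μ + μ) p = 1 / 2 := by
    filter_upwards [Measure.rnDeriv_add_self μ μ, μ.rnDeriv_self] with p hadd hself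
    rw [hadd, hself, one_add_one_eq_two, one_div]
  exact ae_add_measure_iff.2 ⟨hhalf, hhalf⟩

/-- The payoff `∫ log D dμ + ∫ log (1 - D) dν` of a discriminator `D` telling `μ` from `ν`, in the
extended reals. It is encoded by lower Lebesgue integrals of `-log D` and `-log (1 - D)`, so it is
the intended quantity only for measurable `D` with values in `(0, 1)`. -/
noncomputable def ganPayoff (μ ν : Measure α) (D : α → ℝ) : EReal :=
  -(((∫⁻ p, ENNReal.ofReal (-Real.log (D p)) ∂μ
      + ∫⁻ p, ENNReal.ofReal (-Real.log (1 - D p)) ∂ν : ℝ≥0∞)) : EReal)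

/-- The value of the adversarial game between `μ` and `ν`: the supremum of the payoff over
measurable discriminators with values in `(0, 1)`. -/
noncomputable def ganValue (μ ν : Measure α) : EReal :=
  ⨆ (D : α → ℝ) (_ : Measurable D) (_ : ∀ p, D p ∈ Set.Ioo (0 : ℝ) 1), ganPayoff μ ν D

lemma ganPayoff_le_ganValue (μ ν : Measure α) {D : α → ℝ} (hD : Measurable D)
    (hD01 : ∀ p, D p ∈ Set.Ioo (0 : ℝ) 1) : ganPayoff μ ν D ≤ ganValue μ ν :=
  le_iSup₂_of_le D hD (le_iSup_of_le hD01 le_rfl)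

lemma ganPayoff_eq_integral {μ ν : Measure α} {D : α → ℝ} (hD01 : ∀ p, D p ∈ Set.Ioo (0 : ℝ) 1)
    (hμ : Integrable (fun p => Real.log (D p)) μ)
    (hν : Integrable (fun p => Real.log (1 - D p)) ν) :
    ganPayoff μ ν D = ((∫ p, Real.log (D p) ∂μ + ∫ p, Real.log (1 - D p) ∂ν : ℝ) : EReal) := by
  have hlog (p : α) : 0 ≤ -Real.log (D p) :=
    neg_nonneg.2 (Real.log_nonpos (hD01 p).1.le (hD01 p).2.le)
  have hlog' (p : α) : 0 ≤ -Real.log (1 - D p) :=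
    neg_nonneg.2 (Real.log_nonpos (sub_nonneg.2 (hD01 p).2.le) (sub_le_self 1 (hD01 p).1.le))
  have hint := integral_nonneg (μ := μ) (Pi.le_def.2 hlog)
  have hint' := integral_nonneg (μ := ν) (Pi.le_def.2 hlog')
  rw [ganPayoff, ← ofReal_integral_eq_lintegral_ofReal hμ.fun_neg (.of_forall hlog),
    ← ofReal_integral_eq_lintegral_ofReal hν.fun_neg (.of_forall hlog'),
    ← ENNReal.ofReal_add hint hint', EReal.coe_ennreal_ofReal, max_eq_left (add_nonneg hint hint'),
    ← EReal.coe_neg, integral_neg, integral_neg, neg_add, neg_neg, neg_neg]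

lemma ganPayoff_self_le (μ : Measure α) [IsFiniteMeasure μ] {D : α → ℝ} (hD : Measurable D)
    (hD01 : ∀ p, D p ∈ Set.Ioo (0 : ℝ) 1) :
    ganPayoff μ μ D ≤ ((-((μ.real Set.univ + μ.real Set.univ) * Real.log 2) : ℝ) : EReal) := by
  have hlog4 : 0 ≤ Real.log 4 := Real.log_nonneg (by norm_num)
  have hmass : (μ.real Set.univ + μ.real Set.univ) * Real.log 2 = Real.log 4 * μ.real Set.univ := by
    rw [log_four]
    ring
  have hbound : ENNReal.ofReal (Real.log 4 * μ.real Set.univ)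
      ≤ ∫⁻ p, ENNReal.ofReal (-Real.log (D p)) ∂μ
        + ∫⁻ p, ENNReal.ofReal (-Real.log (1 - D p)) ∂μ :=
    calc ENNReal.ofReal (Real.log 4 * μ.real Set.univ)
        = ∫⁻ _, ENNReal.ofReal (Real.log 4) ∂μ := by
          rw [lintegral_const, ENNReal.ofReal_mul hlog4, ofReal_measureReal]
      _ ≤ ∫⁻ p, (ENNReal.ofReal (-Real.log (D p)) + ENNReal.ofReal (-Real.log (1 - D p))) ∂μ :=
          lintegral_mono fun p => (ENNReal.ofReal_le_ofReal
            (by linarith [log_add_log_one_sub_le (hD01 p)])).trans ENNReal.ofReal_add_le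
      _ = _ := lintegral_add_left (by fun_prop) _
  rw [ganPayoff, hmass, EReal.coe_neg, EReal.neg_le_neg_iff]
  simpa only [EReal.coe_ennreal_ofReal, max_eq_left (mul_nonneg hlog4 measureReal_nonneg)] using
    EReal.coe_ennreal_le_coe_ennreal_iff.2 hbound

section TiltedDiscriminatorPayoff

variable {A : Set α} {s : ℝ}

lemma measurable_tiltedDiscriminator (hA : MeasurableSet A) :
    Measurable (tiltedDiscriminator A s) :=
  ((measurable_const.indicator hA).const_add 1).div_const 2

variable (μ : Measure α) [IsFiniteMeasure μ]

lemma integrable_log_tiltedDiscriminator (hA : MeasurableSet A) (hs : -1 < s) :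
    Integrable (fun p => Real.log (tiltedDiscriminator A s p)) μ := by
  simp only [log_tiltedDiscriminator A hs]
  exact ((integrable_const _).indicator hA).sub (integrable_const _)

lemma integral_log_tiltedDiscriminator (hA : MeasurableSet A) (hs : -1 < s) :
    ∫ p, Real.log (tiltedDiscriminator A s p) ∂μ
      = μ.real A * Real.log (1 + s) - μ.real Set.univ * Real.log 2 := by
  simp only [log_tiltedDiscriminator A hs]
  rw [integral_sub ((integrable_const _).indicator hA) (integrable_const _),
    integral_indicator_const _ hA, integral_const, smul_eq_mul, smul_eq_mul]

lemma ganPayoff_tiltedDiscriminator (ν : Measure α) [IsFiniteMeasure ν] (hA : MeasurableSet A)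
    (hs : s ∈ Set.Ioo (-1 : ℝ) 1) :
    ganPayoff μ ν (tiltedDiscriminator A s)
      = ((μ.real A * Real.log (1 + s) + ν.real A * Real.log (1 - s)
          - (μ.real Set.univ + ν.real Set.univ) * Real.log 2 : ℝ) : EReal) := by
  have hs' : -1 < -s := neg_lt_neg hs.2
  rw [ganPayoff_eq_integral (tiltedDiscriminator_mem_Ioo hs)
    (integrable_log_tiltedDiscriminator μ hA hs.1)
    (by simpa only [one_sub_tiltedDiscriminator] using integrable_log_tiltedDiscriminator ν hA hs')]
  simp only [one_sub_tiltedDiscriminator, integral_log_tiltedDiscriminator _ hA hs.1,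
    integral_log_tiltedDiscriminator _ hA hs', ← sub_eq_add_neg]
  congr 1
  ring

end TiltedDiscriminatorPayoff

lemma neg_mass_mul_log_two_le_ganValue (μ ν : Measure α) [IsFiniteMeasure μ] [IsFiniteMeasure ν] :
    ((-((μ.real Set.univ + ν.real Set.univ) * Real.log 2) : ℝ) : EReal) ≤ ganValue μ ν := by
  have hzero : (0 : ℝ) ∈ Set.Ioo (-1 : ℝ) 1 := by norm_num
  simpa [ganPayoff_tiltedDiscriminator μ ν .empty hzero] using
    ganPayoff_le_ganValue μ ν (measurable_tiltedDiscriminator .empty)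
      (tiltedDiscriminator_mem_Ioo (A := ∅) hzero)

lemma ganValue_self (μ : Measure α) [IsFiniteMeasure μ] :
    ganValue μ μ = ((-((μ.real Set.univ + μ.real Set.univ) * Real.log 2) : ℝ) : EReal) := by
  refine le_antisymm ?_ (neg_mass_mul_log_two_le_ganValue μ μ)
  exact iSup₂_le fun D hD => iSup_le fun hD01 => ganPayoff_self_le μ hD hD01

lemma eq_of_ganValue_le {μ ν : Measure α} [IsFiniteMeasure μ] [IsFiniteMeasure ν]
    (h : ganValue μ ν ≤ ((-((μ.real Set.univ + ν.real Set.univ) * Real.log 2) : ℝ) : EReal)) :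
    μ = ν := by
  ext A hA
  refine (measureReal_eq_measureReal_iff).1
    (eq_of_mul_log_one_add_add_mul_log_one_sub_nonpos fun s hs => ?_)
  have hpayoff := (ganPayoff_le_ganValue μ ν (measurable_tiltedDiscriminator hA)
    (tiltedDiscriminator_mem_Ioo hs)).trans h
  rw [ganPayoff_tiltedDiscriminator μ ν hA hs, EReal.coe_le_coe_iff] at hpayoff
  linarith

end Game

theorem sgan_game_xz_general {α : Type*} [MeasurableSpace α]
    (μ ν : Measure α) [IsFiniteMeasure μ] [IsFiniteMeasure ν] :
    ((-((μ.real Set.univ + ν.real Set.univ) * Real.log 2) : ℝ) : EReal) ≤ ganValue μ ν ∧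
      (ganValue μ ν = ((-((μ.real Set.univ + ν.real Set.univ) * Real.log 2) : ℝ) : EReal)
        ↔ μ = ν) ∧
      (μ = ν → ∀ᵐ p ∂(μ + ν), μ.rnDeriv (μ + ν) p = 1 / 2) := by
  refine ⟨neg_mass_mul_log_two_le_ganValue μ ν, ⟨fun h => eq_of_ganValue_le h.le, ?_⟩, ?_⟩
  · rintro rfl
    exact ganValue_self μ
  · rintro rfl
    exact rnDeriv_add_self_ae_eq_half μ

/-- Theorem 1 of the paper, the adversarial game `L_xz`.
For any Markov kernels `I : X → Z` (inference) and `G : Y × Z → X` (generator), with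
inference joint `πi = P_X ⊗ₘ I` and generator joint `πg` the pushforward of
`(p_Y × p_Z) ⊗ₘ G` under `((y,z),x) ↦ (x,z)`, the supremum over measurable
discriminators `D : X × Z → (0,1)` of
`L_xz(D) = ∫ log D dπi + ∫ log (1 - D) dπg` (extended-real valued; encoded as minus the
sum of the `ℝ≥0∞`-valued integrals of the nonnegative functions `-log D`, `-log (1-D)`)
is at least `-log 4`, with equality iff `πi = πg`; and at that point the optimal
discriminator `dπi/d(πi + πg)` equals `1/2` `(πi + πg)`-a.e. -/
theorem sgan_game_xz {X Y Z : Type*}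
    [MeasurableSpace X] [MeasurableSpace Y] [MeasurableSpace Z]
    (P_X : Measure X) [IsProbabilityMeasure P_X]
    (pY : Measure Y) [IsProbabilityMeasure pY]
    (pZ : Measure Z) [IsProbabilityMeasure pZ]
    (I : Kernel X Z) [IsMarkovKernel I]
    (G : Kernel (Y × Z) X) [IsMarkovKernel G] :
    let πi : Measure (X × Z) := P_X ⊗ₘ I
    let πg : Measure (X × Z) := ((pY.prod pZ) ⊗ₘ G).map (fun q => (q.2, q.1.2))
    let g : EReal := ⨆ (D : X × Z → ℝ) (_ : Measurable D)
        (_ : ∀ p, D p ∈ Set.Ioo (0 : ℝ) 1),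
      -(((∫⁻ p, ENNReal.ofReal (-Real.log (D p)) ∂πi
          + ∫⁻ p, ENNReal.ofReal (-Real.log (1 - D p)) ∂πg : ℝ≥0∞)) : EReal)
    ((-Real.log 4 : ℝ) : EReal) ≤ g ∧
      (g = ((-Real.log 4 : ℝ) : EReal) ↔ πi = πg) ∧
      (πi = πg → ∀ᵐ p ∂(πi + πg), πi.rnDeriv (πi + πg) p = 1 / 2) := by
  intro πi πg g
  have : IsProbabilityMeasure πg := Measure.isProbabilityMeasure_map (by fun_prop)
  simpa only [g, ganValue, ganPayoff, probReal_univ, one_add_one_eq_two, ← log_four] using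
    sgan_game_xz_general πi πg
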